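/- Let D be an ADF and let v be any interpretation of D. Then there exists a strongly admissible interpretation w of D with w ≤_i v such that every strongly admissible interpretation w' of D with w' ≤_i v satisfies w' ≤_i w; moreover this greatest strongly admissible interpretation below v is unique. -/

import Mathlib

/-!
Strong justification is monotone in the information order: when an interpretation grows, decided
values persist and every restriction of it has fewer completions, so a derivation for the smaller
interpretation is also one for the larger. In the flat order on `t`, `f`, `u` the supremum of a
bounded set, unless it is `u`, belongs to the set. Hence an argument decided by a supremum of
strongly admissible interpretations is decided, and strongly justified, by one of them already, and
the supremum is strongly admissible. For the interpretations below `v`, which are bounded by `v`,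
this supremum exists and lies below `v`.
-/

/-- Three truth values: true, false, undecided. -/
inductive TV : Type
  | t | f | u
deriving DecidableEq, Repr

/-- The information order on truth values: u <_i t and u <_i f. -/
def TV.ile (x y : TV) : Prop := x = TV.u ∨ x = y

/-- The information order on interpretations, extended pointwise. -/
def ILE {A : Type*} (v w : A → TV) : Prop := ∀ a, TV.ile (v a) (w a)

/-- An abstract dialectical framework on a set of arguments `A`:
each argument `a` has an acceptance condition `C a : (A → Bool) → Bool`. -/
structure ADF (A : Type*) where
  C : A → (A → Bool) → Bool

/-- The trivial interpretation mapping every argument to undecided. -/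
def trivialInterp (A : Type*) : A → TV := fun _ => TV.u

/-- The parents of `a` are the arguments on which its acceptance condition depends. -/
def ADF.parents {A : Type*} [DecidableEq A] (D : ADF A) (a : A) : Set A :=
  {b | ∃ w : A → Bool, D.C a w ≠ D.C a (Function.update w b (!w b))}

/-- A two-valued assignment `w` completes a three-valued interpretation `v`. -/
def Completes {A : Type*} (w : A → Bool) (v : A → TV) : Prop :=
  ∀ b, (v b = TV.t → w b = true) ∧ (v b = TV.f → w b = false)

/-- `φ` is irrefutable under `v`: every completion of `v` makes `φ` true. -/
def Irrefutable {A : Type*} (φ : (A → Bool) → Bool) (v : A → TV) : Prop :=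
  ∀ w : A → Bool, Completes w v → φ w = true

/-- `φ` is unsatisfiable under `v`: every completion of `v` makes `φ` false. -/
def Unsat {A : Type*} (φ : (A → Bool) → Bool) (v : A → TV) : Prop :=
  ∀ w : A → Bool, Completes w v → φ w = false

open Classical in
/-- The characteristic operator Γ_D of an ADF. -/
noncomputable def Gamma {A : Type*} (D : ADF A) (v : A → TV) : A → TV := fun a =>
  if Irrefutable (D.C a) v then TV.t
  else if Unsat (D.C a) v then TV.f
  else TV.u

open Classical in
/-- `v|_P`: agrees with `v` on `P` and is undecided elsewhere. -/
noncomputable def restrictTV {A : Type*} (v : A → TV) (P : Set A) : A → TV :=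
  fun b => if b ∈ P then v b else TV.u

/-- Strong acceptability/deniability of an argument with respect to interpretation `v`
and set `S`, relative to an excluded set `E` (the first index). An argument `a` with
`v a = t` (resp. `v a = f`) is strongly acceptable (resp. strongly deniable) iff there is
`P ⊆ (parents a ∩ S) \ E` with `φ_a^{v|_P}` irrefutable (resp. unsatisfiable) and every
`p ∈ P` strongly acceptable/deniable relative to `E ∪ {p}`. -/
inductive SJrel {A : Type*} [DecidableEq A] (D : ADF A) (v : A → TV) (S : Set A) :
    Set A → A → Prop
  | acc (E : Set A) (a : A) (P : Set A)
      (ha : v a = TV.t)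
      (hP : P ⊆ (D.parents a ∩ S) \ E)
      (hirr : Irrefutable (D.C a) (restrictTV v P))
      (hrec : ∀ p ∈ P, SJrel D v S (E ∪ {p}) p) : SJrel D v S E a
  | den (E : Set A) (a : A) (P : Set A)
      (ha : v a = TV.f)
      (hP : P ⊆ (D.parents a ∩ S) \ E)
      (hunsat : Unsat (D.C a) (restrictTV v P))
      (hrec : ∀ p ∈ P, SJrel D v S (E ∪ {p}) p) : SJrel D v S E a

/-- `a` is strongly acceptable/deniable w.r.t. `v` and `S`
(i.e., relative to the excluded set `{a}`). -/
def StronglyJustified {A : Type*} [DecidableEq A] (D : ADF A) (v : A → TV)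
    (S : Set A) (a : A) : Prop :=
  SJrel D v S {a} a

/-- `S` is a least set for `a` with respect to `v`. -/
def LeastSet {A : Type*} [DecidableEq A] (D : ADF A) (v : A → TV)
    (a : A) (S : Set A) : Prop :=
  StronglyJustified D v S a ∧
  ∀ S' : Set A, S'.ncard < S.ncard → ¬ StronglyJustified D v S' a

/-- An interpretation is strongly admissible iff every argument assigned `t`/`f`
is strongly acceptable/deniable w.r.t. `v` and some set `S`. -/
def StronglyAdmissible {A : Type*} [DecidableEq A] (D : ADF A) (v : A → TV) : Prop :=
  ∀ a : A, v a ≠ TV.u → ∃ S : Set A, StronglyJustified D v S a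

/-- `g` is the grounded interpretation of `D`: the least fixed point of `Γ_D`. -/
def IsGrounded {A : Type*} (D : ADF A) (g : A → TV) : Prop :=
  Gamma D g = g ∧ ∀ w : A → TV, Gamma D w = w → ILE g w

/-- An interpretation is admissible iff `v ≤_i Γ_D(v)`. -/
def Admissible {A : Type*} (D : ADF A) (v : A → TV) : Prop :=
  ILE v (Gamma D v)

/-- An interpretation is conflict-free. -/
def ConflictFree {A : Type*} (D : ADF A) (v : A → TV) : Prop :=
  ∀ a : A, (v a = TV.t → ∃ w : A → Bool, Completes w v ∧ D.C a w = true) ∧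
           (v a = TV.f → Unsat (D.C a) v)

/-- The join of two interpretations: take `v`'s value where defined, else `w`'s. -/
def joinI {A : Type*} (v w : A → TV) : A → TV :=
  fun a => if v a = TV.u then w a else v a

namespace TV

/-- The information order. The induced pointwise order on interpretations `A → TV` is
definitionally `ILE`. -/
instance : PartialOrder TV where
  le := TV.ile
  le_refl _ := Or.inr rfl
  le_trans := by
    rintro x y z (rfl | rfl) hyz
    · exact Or.inl rfl
    · exact hyz
  le_antisymm := by
    rintro x y (rfl | rfl) hyx
    · exact (hyx.elim id id).symm
    · rfl

theorem u_le (x : TV) : u ≤ x := Or.inl rfl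

theorem eq_of_le_of_ne_u {x y : TV} (hxy : x ≤ y) (hx : x ≠ u) : x = y :=
  hxy.resolve_left hx

theorem mem_of_isLUB {X : Set TV} {x : TV} (hX : IsLUB X x) (hx : x ≠ u) : x ∈ X := by
  by_contra hxX
  have hu : u ∈ upperBounds X := fun y hy => by
    by_contra hyu
    have hyx : y = x := eq_of_le_of_ne_u (hX.1 hy) fun h => hyu h.le
    exact hxX (hyx ▸ hy)
  exact hx ((hX.2 hu).antisymm (u_le x))

theorem exists_isLUB_of_bddAbove {X : Set TV} (hX : BddAbove X) : ∃ x, IsLUB X x := by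
  obtain ⟨b, hb⟩ := hX
  by_cases hdec : ∃ x ∈ X, x ≠ u
  · obtain ⟨x, hxX, hx⟩ := hdec
    have hxb : x = b := eq_of_le_of_ne_u (hb hxX) hx
    exact ⟨x, hxb ▸ hb, fun _ hy => hy hxX⟩
  · push Not at hdec
    exact ⟨u, fun x hx => (hdec x hx).le, fun y _ => u_le y⟩

end TV

section InformationOrder

variable {A : Type*} {v w : A → TV}

theorem exists_isLUB_interp_of_bddAbove {W : Set (A → TV)} (hW : BddAbove W) :
    ∃ s, IsLUB W s := by
  have hpt (a : A) : ∃ x, IsLUB (Function.eval a '' W) x :=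
    TV.exists_isLUB_of_bddAbove ((Function.monotone_eval a).map_bddAbove hW)
  choose s hs using hpt
  exact ⟨s, isLUB_pi.mpr hs⟩

theorem exists_mem_apply_eq_of_isLUB {W : Set (A → TV)} {s : A → TV} (hs : IsLUB W s) {a : A}
    (ha : s a ≠ TV.u) : ∃ w ∈ W, w a = s a :=
  TV.mem_of_isLUB (isLUB_pi.mp hs a) ha

theorem restrictTV_mono (hvw : v ≤ w) (P : Set A) : restrictTV v P ≤ restrictTV w P := by
  intro b
  unfold restrictTV
  split_ifs
  · exact hvw b
  · exact le_rfl

theorem Completes.anti (hvw : v ≤ w) {c : A → Bool} (hc : Completes c w) : Completes c v := by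
  intro b
  rcases hvw b with hu | hb
  · simp [hu]
  · exact hb ▸ hc b

theorem Irrefutable.mono (hvw : v ≤ w) {φ : (A → Bool) → Bool} (hφ : Irrefutable φ v) :
    Irrefutable φ w :=
  fun c hc => hφ c (hc.anti hvw)

theorem Unsat.mono (hvw : v ≤ w) {φ : (A → Bool) → Bool} (hφ : Unsat φ v) : Unsat φ w :=
  fun c hc => hφ c (hc.anti hvw)

end InformationOrder

section StrongAdmissibility

variable {A : Type*} [DecidableEq A] {D : ADF A}

theorem SJrel.mono {v w : A → TV} (hvw : v ≤ w) {S E : Set A} {a : A} (h : SJrel D v S E a) :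
    SJrel D w S E a := by
  have persists {b : A} {x : TV} (hb : v b = x) (hx : x ≠ TV.u) : w b = x := by
    subst hb
    exact (TV.eq_of_le_of_ne_u (hvw b) hx).symm
  induction h with
  | acc E a P ha hP hirr _ ih =>
    exact .acc E a P (persists ha (by decide)) hP (hirr.mono (restrictTV_mono hvw P)) ih
  | den E a P ha hP hunsat _ ih =>
    exact .den E a P (persists ha (by decide)) hP (hunsat.mono (restrictTV_mono hvw P)) ih

theorem StronglyAdmissible.of_isLUB {W : Set (A → TV)} (hW : ∀ w ∈ W, StronglyAdmissible D w)
    {s : A → TV} (hs : IsLUB W s) : StronglyAdmissible D s := by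
  intro a ha
  obtain ⟨w, hwW, hwa⟩ := exists_mem_apply_eq_of_isLUB hs ha
  obtain ⟨S, hS⟩ := hW w hwW a (hwa ▸ ha)
  exact ⟨S, SJrel.mono (hs.1 hwW) hS⟩

theorem exists_isGreatest_stronglyAdmissible_le (D : ADF A) (v : A → TV) :
    ∃ s, IsGreatest {w | StronglyAdmissible D w ∧ w ≤ v} s := by
  have hv : v ∈ upperBounds {w | StronglyAdmissible D w ∧ w ≤ v} := fun _ hw => hw.2
  obtain ⟨s, hs⟩ := exists_isLUB_interp_of_bddAbove ⟨v, hv⟩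
  exact ⟨s, ⟨.of_isLUB (fun _ hw => hw.1) hs, hs.2 hv⟩, hs.1⟩

end StrongAdmissibility

theorem exists_unique_max_strongly_admissible_below_general {A : Type*} [DecidableEq A]
    (D : ADF A) (v : A → TV) :
    ∃! w : A → TV, StronglyAdmissible D w ∧ ILE w v ∧
      ∀ w' : A → TV, StronglyAdmissible D w' → ILE w' v → ILE w' w := by
  obtain ⟨s, hs⟩ := exists_isGreatest_stronglyAdmissible_le D v
  refine ⟨s, ⟨hs.1.1, hs.1.2, fun w' hw' hle => hs.2 ⟨hw', hle⟩⟩, ?_⟩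
  rintro w ⟨hw, hwv, hmax⟩
  have hgreatest : IsGreatest {w | StronglyAdmissible D w ∧ w ≤ v} w :=
    ⟨⟨hw, hwv⟩, fun w' hw' => hmax w' hw'.1 hw'.2⟩
  exact hgreatest.unique hs

/-- Below any interpretation `v` there is a unique greatest strongly
admissible interpretation. -/
theorem exists_unique_max_strongly_admissible_below {A : Type*} [Fintype A]
    [DecidableEq A] (D : ADF A) (v : A → TV) :
    ∃! w : A → TV, StronglyAdmissible D w ∧ ILE w v ∧
      ∀ w' : A → TV, StronglyAdmissible D w' → ILE w' v → ILE w' w :=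
  exists_unique_max_strongly_admissible_below_general D v
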